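/- A free product G₁ * G₂ of two groups is left-orderable if and only if both G₁ and G₂ are left-orderable. -/

import Mathlib

/-- A group is left-orderable if it admits a strict total order invariant under
left multiplication. -/
def IsLeftOrderable (G : Type*) [Group G] : Prop :=
  ∃ r : G → G → Prop, IsStrictTotalOrder G r ∧ ∀ f g h : G, r g h → r (f * g) (f * h)

/-!
A left order on `G` amounts to its sign function `τ : G → ℤ`, which satisfies `τ x⁻¹ = -τ x`, is odd
away from `1`, and is additive up to an error of at most `1`. Conversely any `τ` with these three
properties gives the left order `a < b ↔ 0 < τ (a⁻¹ * b)`.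

Given such `τ i` on the factors `G i`, order the index set linearly and assign to a reduced word
`x₁ ⋯ xₙ` the sum of the `τ xₖ` and of a sign `±1` for each step up or down in the index from `xₖ`
to `xₖ₊₁`. As a sum of `2n - 1` odd numbers it is odd, and it changes sign under inversion. In
`g⁻¹ * h` the common prefix of the reduced words of `g` and `h` cancels, so additivity up to `1`
depends only on the point where the two words branch; there it holds by additivity up to `1` in a
factor or in the linear order of the indices. This is the argument of Dicks and Šunić.
-/

open Monoid

section CmpSign

variable {α : Type*} [LinearOrder α]

/-- The sign of `b - a`, as it would be written in an ordered group: `1`, `-1` or `0` according to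
whether `a < b`, `b < a` or `a = b`. It measures both the sign of an element of a left-ordered group
and the direction of an index change in a word. -/
def cmpSign (a b : α) : ℤ :=
  if a < b then 1 else if b < a then -1 else 0

theorem cmpSign_swap (a b : α) : cmpSign b a = -cmpSign a b := by
  grind [cmpSign]

theorem odd_cmpSign {a b : α} (h : a ≠ b) : Odd (cmpSign a b) := by
  rcases h.lt_or_gt with h | h <;> simp [cmpSign, h, h.not_gt]

theorem abs_cmpSign_le_one (a b : α) : |cmpSign a b| ≤ 1 := by
  grind [cmpSign]

theorem abs_cmpSign_sub_cmpSign_sub_cmpSign_le_one (a b c : α) :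
    |cmpSign a c - cmpSign a b - cmpSign b c| ≤ 1 := by
  grind [cmpSign]

theorem cmpSign_mul_left {G : Type*} [Group G] [LinearOrder G] [MulLeftStrictMono G] (a b c : G) :
    cmpSign (a * b) (a * c) = cmpSign b c := by
  simp only [cmpSign, mul_lt_mul_iff_left]

end CmpSign

/-- An antisymmetric quasimorphism of defect at most `1` with odd values away from `1`. Left orders
are encoded by such functions because, unlike the orders themselves, they can be summed along a
word; oddness serves to guarantee that a sum does not vanish. -/
structure IsOddQuasimorphism {G : Type*} [Group G] (τ : G → ℤ) : Prop where
  map_inv : ∀ x, τ x⁻¹ = -τ x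
  odd : ∀ x, x ≠ 1 → Odd (τ x)
  abs_map_mul_sub_sub_le : ∀ x y, |τ (x * y) - τ x - τ y| ≤ 1

namespace IsOddQuasimorphism

variable {G : Type*} [Group G] {τ : G → ℤ}

theorem map_one (hτ : IsOddQuasimorphism τ) : τ 1 = 0 := by
  have := hτ.map_inv 1
  rw [inv_one] at this
  lia

theorem abs_map_inv_mul_add_sub_le (hτ : IsOddQuasimorphism τ) (x y : G) :
    |τ (x⁻¹ * y) + τ x - τ y| ≤ 1 := by
  simpa [hτ.map_inv] using hτ.abs_map_mul_sub_sub_le x⁻¹ y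

theorem mul_pos (hτ : IsOddQuasimorphism τ) {x y : G} (hx : 0 < τ x) (hy : 0 < τ y) :
    0 < τ (x * y) := by
  have := abs_le.1 (hτ.abs_map_mul_sub_sub_le x y)
  lia

theorem eq_one_of_map_eq_zero (hτ : IsOddQuasimorphism τ) {x : G} (hx : τ x = 0) : x = 1 := by
  by_contra hne
  simpa [hx] using hτ.odd x hne

theorem isLeftOrderable (hτ : IsOddQuasimorphism τ) : IsLeftOrderable G := by
  refine ⟨fun a b ↦ 0 < τ (a⁻¹ * b),
    { trichotomous := fun a b hab hba ↦ ?_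
      irrefl := fun a ↦ by simp [hτ.map_one]
      trans := fun a b c hab hbc ↦ by simpa [mul_assoc] using hτ.mul_pos hab hbc },
    fun f g h hgh ↦ by simpa [mul_assoc] using hgh⟩
  have hswap : τ (b⁻¹ * a) = -τ (a⁻¹ * b) := by simp [← hτ.map_inv]
  exact inv_mul_eq_one.1 (hτ.eq_one_of_map_eq_zero (by lia))

end IsOddQuasimorphism

theorem isOddQuasimorphism_cmpSign_one (G : Type*) [Group G] [LinearOrder G]
    [MulLeftStrictMono G] : IsOddQuasimorphism (cmpSign (1 : G)) where
  map_inv x := by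
    rw [← cmpSign_swap, ← cmpSign_mul_left x, mul_one, mul_inv_cancel]
  odd _ hx := odd_cmpSign hx.symm
  abs_map_mul_sub_sub_le x y := by
    have hy : cmpSign 1 y = cmpSign x (x * y) := by rw [← cmpSign_mul_left x, mul_one]
    rw [hy]
    exact abs_cmpSign_sub_cmpSign_sub_cmpSign_le_one 1 x (x * y)

namespace IsLeftOrderable

variable {G H : Type*} [Group G] [Group H]

theorem exists_isOddQuasimorphism (hG : IsLeftOrderable G) :
    ∃ τ : G → ℤ, IsOddQuasimorphism τ := by
  classical
  obtain ⟨r, hr, hmul⟩ := hG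
  let : LinearOrder G := linearOrderOfSTO r
  have : MulLeftStrictMono G := ⟨fun f _ _ hgh ↦ hmul f _ _ hgh⟩
  exact ⟨_, isOddQuasimorphism_cmpSign_one G⟩

theorem of_injective (hH : IsLeftOrderable H) (f : G →* H) (hf : Function.Injective f) :
    IsLeftOrderable G := by
  obtain ⟨r, hr, hmul⟩ := hH
  refine ⟨f ⁻¹'o r, (RelEmbedding.preimage ⟨f, hf⟩ r).isStrictTotalOrder, fun a b c hbc ↦ ?_⟩
  simpa [Order.Preimage] using hmul (f a) _ _ hbc

theorem prod (hG : IsLeftOrderable G) (hH : IsLeftOrderable H) : IsLeftOrderable (G × H) := by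
  obtain ⟨r, hr, hrmul⟩ := hG
  obtain ⟨s, hs, hsmul⟩ := hH
  refine ⟨Prod.Lex r s, { }, fun f g h hgh ↦ ?_⟩
  simp only [Prod.lex_def] at hgh ⊢
  exact hgh.imp (hrmul _ _ _) fun ⟨h₁, h₂⟩ ↦ ⟨by simp [h₁], hsmul _ _ _ h₂⟩

end IsLeftOrderable

section JumpSign

variable {ι : Type*} [LinearOrder ι]

/-- The sign of the index change where two words are joined, as a function of the last index of the
first word and the first index of the second. The value `none` stands for the index of an empty
word, for which there is no contribution. -/
def jumpSign : Option ι → Option ι → ℤ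
  | some i, some j => cmpSign i j
  | _, _ => 0

@[simp]
theorem jumpSign_none_left (b : Option ι) : jumpSign none b = 0 := rfl

@[simp]
theorem jumpSign_none_right (a : Option ι) : jumpSign a none = 0 := by
  cases a <;> rfl

theorem jumpSign_swap (a b : Option ι) : jumpSign b a = -jumpSign a b := by
  rcases a with _ | i <;> rcases b with _ | j
  case some.some => exact cmpSign_swap i j
  all_goals rfl

theorem abs_jumpSign_le_one (a b : Option ι) : |jumpSign a b| ≤ 1 := by
  rcases a with _ | i <;> rcases b with _ | j
  case some.some => exact abs_cmpSign_le_one i j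
  all_goals simp [jumpSign]

theorem abs_jumpSign_sub_jumpSign_sub_jumpSign_le_one (a b : Option ι) (i : ι) :
    |jumpSign a b - jumpSign a (some i) - jumpSign (some i) b| ≤ 1 := by
  rcases a with _ | j <;> rcases b with _ | k
  case some.some => exact abs_cmpSign_sub_cmpSign_sub_cmpSign_le_one j i k
  all_goals simp [jumpSign, abs_cmpSign_le_one]

end JumpSign

section SyllableWeight

variable {ι : Type*} [LinearOrder ι] {G : ι → Type*} (τ : ∀ i, G i → ℤ)

/-- The sum of the values of `τ` on the syllables of a list and of the signs of all index changes
between consecutive syllables. -/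
def syllableWeight : List (Σ i, G i) → ℤ
  | [] => 0
  | l :: L => τ l.1 l.2 + jumpSign (some l.1) (L.head?.map Sigma.fst) + syllableWeight L

theorem syllableWeight_cons (l : Σ i, G i) (L : List (Σ i, G i)) :
    syllableWeight τ (l :: L) =
      τ l.1 l.2 + jumpSign (some l.1) (L.head?.map Sigma.fst) + syllableWeight τ L := rfl

theorem syllableWeight_append (L M : List (Σ i, G i)) :
    syllableWeight τ (L ++ M) = syllableWeight τ L +
      jumpSign (L.getLast?.map Sigma.fst) (M.head?.map Sigma.fst) + syllableWeight τ M := by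
  induction L with
  | nil => simp [syllableWeight]
  | cons l L ih =>
    rcases L with _ | ⟨l', L⟩
    · simp [syllableWeight]
    · rw [List.cons_append, syllableWeight_cons, ih, syllableWeight_cons τ l]
      simp only [List.cons_append, List.head?_cons, List.getLast?_cons_cons]
      ring

end SyllableWeight

section Monoid

variable {ι : Type*} {M : ι → Type*} [∀ i, Monoid (M i)]

theorem exists_word_prod_eq (g : CoprodI M) : ∃ w : CoprodI.Word M, w.prod = g := by
  classical exact CoprodI.Word.equiv.symm.surjective g

variable [LinearOrder ι] [∀ i, DecidableEq (M i)] {τ : ∀ i, M i → ℤ}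

variable (τ) in
/-- The weight of an element of a free product is the weight of its reduced word. -/
def coprodWeight (g : CoprodI M) : ℤ :=
  syllableWeight τ (CoprodI.Word.equiv g).toList

theorem coprodWeight_prod (w : CoprodI.Word M) :
    coprodWeight τ w.prod = syllableWeight τ w.toList :=
  congrArg (fun u : CoprodI.Word M ↦ syllableWeight τ u.toList)
    (CoprodI.Word.equiv.apply_symm_apply w)

theorem coprodWeight_one : coprodWeight τ 1 = 0 :=
  coprodWeight_prod CoprodI.Word.empty

theorem coprodWeight_of_mul_prod {i : ι} {x : M i} {w : CoprodI.Word M} (hx : x ≠ 1)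
    (hw : w.fstIdx ≠ some i) :
    coprodWeight τ (CoprodI.of x * w.prod) =
      τ i x + jumpSign (some i) w.fstIdx + coprodWeight τ w.prod := by
  rw [← CoprodI.Word.prod_cons i x w hx hw, coprodWeight_prod, coprodWeight_prod]
  rfl

theorem odd_coprodWeight_prod (hτ : ∀ i x, x ≠ 1 → Odd (τ i x)) {w : CoprodI.Word M}
    (hw : w ≠ CoprodI.Word.empty) : Odd (coprodWeight τ w.prod) := by
  induction w using CoprodI.Word.consRecOn with
  | empty => exact absurd rfl hw
  | cons i x w hwi hx ih =>
    rw [CoprodI.Word.prod_cons, coprodWeight_of_mul_prod hx hwi]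
    cases w using CoprodI.Word.consRecOn with
    | empty => simpa [CoprodI.Word.fstIdx, coprodWeight_one] using hτ i x hx
    | cons j y w hwj hy _ =>
      have hij : i ≠ j := by simpa [eq_comm] using hwi
      have htail : Odd (coprodWeight τ (CoprodI.Word.cons y w hwj hy).prod) :=
        ih fun h ↦ by simpa using congrArg CoprodI.Word.toList h
      rw [CoprodI.Word.fstIdx_cons]
      exact ((hτ i x hx).add_odd (odd_cmpSign hij)).add_odd htail

end Monoid

section Group

variable {ι : Type*} {G : ι → Type*} [∀ i, Group (G i)]

/-- The formal inverse of a list of syllables. -/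
def syllableInvRev (L : List (Σ i, G i)) : List (Σ i, G i) :=
  (L.map fun l ↦ ⟨l.1, l.2⁻¹⟩).reverse

theorem prod_map_of_syllableInvRev (L : List (Σ i, G i)) :
    ((syllableInvRev L).map fun l ↦ (CoprodI.of l.2 : CoprodI G)).prod =
      (L.map fun l ↦ (CoprodI.of l.2 : CoprodI G)).prod⁻¹ := by
  simp [syllableInvRev, List.prod_inv_reverse, Function.comp_def]

theorem map_fst_getLast?_syllableInvRev (L : List (Σ i, G i)) :
    (syllableInvRev L).getLast?.map Sigma.fst = L.head?.map Sigma.fst := by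
  cases L <;> simp [syllableInvRev]

theorem isChain_syllableInvRev {L : List (Σ i, G i)} (hL : L.IsChain (·.1 ≠ ·.1)) :
    (syllableInvRev L).IsChain (·.1 ≠ ·.1) := by
  rw [syllableInvRev, List.isChain_reverse, List.isChain_map]
  exact hL.imp fun _ _ ↦ Ne.symm

theorem exists_word_prod_eq_inv_mul (v w : CoprodI.Word G)
    (h : ∀ i, v.fstIdx = some i → w.fstIdx ≠ some i) :
    ∃ u : CoprodI.Word G, u.toList = syllableInvRev v.toList ++ w.toList ∧
      u.prod = v.prod⁻¹ * w.prod := by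
  have hchain : (syllableInvRev v.toList ++ w.toList).IsChain (·.1 ≠ ·.1) := by
    refine (isChain_syllableInvRev v.chain_ne).append w.chain_ne fun a ha b hb hab ↦ ?_
    refine h a.1 ?_ (by simp [CoprodI.Word.fstIdx, Option.mem_def.1 hb, hab])
    rw [CoprodI.Word.fstIdx, ← map_fst_getLast?_syllableInvRev, Option.mem_def.1 ha,
      Option.map_some]
  have hne : ∀ l ∈ syllableInvRev v.toList ++ w.toList, l.2 ≠ 1 := by
    simp only [syllableInvRev, List.mem_append, List.mem_reverse, List.mem_map]
    rintro _ (⟨l, hl, rfl⟩ | hl)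
    · exact inv_ne_one.2 (v.ne_one l hl)
    · exact w.ne_one _ hl
  exact ⟨⟨_, hne, hchain⟩, rfl, by
    simp [CoprodI.Word.prod, prod_map_of_syllableInvRev]⟩

variable [LinearOrder ι] {τ : ∀ i, G i → ℤ}

theorem syllableWeight_syllableInvRev (hτ : ∀ i x, τ i x⁻¹ = -τ i x) (L : List (Σ i, G i)) :
    syllableWeight τ (syllableInvRev L) = -syllableWeight τ L := by
  induction L with
  | nil => rfl
  | cons l L ih =>
    have hcons : syllableInvRev (l :: L) = syllableInvRev L ++ [⟨l.1, l.2⁻¹⟩] := by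
      simp [syllableInvRev]
    rw [hcons, syllableWeight_append, ih, map_fst_getLast?_syllableInvRev]
    simp only [syllableWeight, List.head?_cons, List.head?_nil, Option.map_some, Option.map_none,
      hτ, jumpSign_none_right, jumpSign_swap (some l.1) (L.head?.map Sigma.fst)]
    ring

variable [∀ i, DecidableEq (G i)]

theorem coprodWeight_inv_mul_of_fstIdx_ne (hτ : ∀ i x, τ i x⁻¹ = -τ i x) {v w : CoprodI.Word G}
    (h : ∀ i, v.fstIdx = some i → w.fstIdx ≠ some i) :
    coprodWeight τ (v.prod⁻¹ * w.prod) =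
      -coprodWeight τ v.prod + jumpSign v.fstIdx w.fstIdx + coprodWeight τ w.prod := by
  obtain ⟨u, hu, hprod⟩ := exists_word_prod_eq_inv_mul v w h
  rw [← hprod, coprodWeight_prod, hu, syllableWeight_append, syllableWeight_syllableInvRev hτ,
    map_fst_getLast?_syllableInvRev, coprodWeight_prod, coprodWeight_prod]
  rfl

theorem coprodWeight_inv (hτ : ∀ i x, τ i x⁻¹ = -τ i x) (g : CoprodI G) :
    coprodWeight τ g⁻¹ = -coprodWeight τ g := by
  obtain ⟨w, rfl⟩ := exists_word_prod_eq g
  have := coprodWeight_inv_mul_of_fstIdx_ne hτ (v := w) (w := CoprodI.Word.empty)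
    (by simp [CoprodI.Word.fstIdx])
  simpa [CoprodI.Word.fstIdx, coprodWeight_one] using this

variable (τ) in
/-- The failure of additivity of the weight on the product `g⁻¹ * h`. The inverse is there so that
cancellation in the product takes place between equal, rather than mutually inverse, syllables. -/
def coprodDefect (g h : CoprodI G) : ℤ :=
  coprodWeight τ (g⁻¹ * h) + coprodWeight τ g - coprodWeight τ h

theorem coprodDefect_of_fstIdx_ne (hτ : ∀ i x, τ i x⁻¹ = -τ i x) {v w : CoprodI.Word G}
    (h : ∀ i, v.fstIdx = some i → w.fstIdx ≠ some i) :
    coprodDefect τ v.prod w.prod = jumpSign v.fstIdx w.fstIdx := by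
  rw [coprodDefect, coprodWeight_inv_mul_of_fstIdx_ne hτ h]
  ring

theorem coprodDefect_of_mul_of_mul_of_ne (hτ : ∀ i x, τ i x⁻¹ = -τ i x) {i : ι} {x y : G i}
    (hx : x ≠ 1) (hy : y ≠ 1) (hxy : x ≠ y) {v w : CoprodI.Word G} (hv : v.fstIdx ≠ some i)
    (hw : w.fstIdx ≠ some i) :
    coprodDefect τ (CoprodI.of x * v.prod) (CoprodI.of y * w.prod) =
      τ i (x⁻¹ * y) + τ i x - τ i y := by
  have hxy' : x⁻¹ * y ≠ 1 := inv_mul_eq_one.not.2 hxy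
  have hmerge : (CoprodI.of x * v.prod)⁻¹ * (CoprodI.of y * w.prod) =
      v.prod⁻¹ * (CoprodI.Word.cons (x⁻¹ * y) w hw hxy').prod := by
    rw [CoprodI.Word.prod_cons, map_mul, map_inv]
    group
  have hne : ∀ j, v.fstIdx = some j →
      (CoprodI.Word.cons (x⁻¹ * y) w hw hxy').fstIdx ≠ some j := by
    rintro j hj hj'
    exact hv (hj.trans (hj'.symm.trans (CoprodI.Word.fstIdx_cons _ _ _ _)))
  rw [coprodDefect, hmerge, coprodWeight_inv_mul_of_fstIdx_ne hτ hne, CoprodI.Word.prod_cons,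
    CoprodI.Word.fstIdx_cons, coprodWeight_of_mul_prod hxy' hw, coprodWeight_of_mul_prod hx hv,
    coprodWeight_of_mul_prod hy hw, jumpSign_swap (some i) v.fstIdx]
  ring

theorem coprodDefect_of_mul_of_mul_self {i : ι} {x : G i} (hx : x ≠ 1) {v w : CoprodI.Word G}
    (hv : v.fstIdx ≠ some i) (hw : w.fstIdx ≠ some i) :
    coprodDefect τ (CoprodI.of x * v.prod) (CoprodI.of x * w.prod) =
      coprodDefect τ v.prod w.prod + jumpSign (some i) v.fstIdx - jumpSign (some i) w.fstIdx := by
  have hcancel : (CoprodI.of x * v.prod)⁻¹ * (CoprodI.of x * w.prod) = v.prod⁻¹ * w.prod := by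
    group
  rw [coprodDefect, coprodDefect, hcancel, coprodWeight_of_mul_prod hx hv,
    coprodWeight_of_mul_prod hx hw]
  ring

theorem abs_coprodDefect_of_mul_of_mul_self_le_one (hτ : ∀ i x, τ i x⁻¹ = -τ i x) {i : ι} {x : G i}
    (hx : x ≠ 1) {v w : CoprodI.Word G} (hv : v.fstIdx ≠ some i) (hw : w.fstIdx ≠ some i)
    (h : |coprodDefect τ v.prod w.prod| ≤ 1) :
    |coprodDefect τ (CoprodI.of x * v.prod) (CoprodI.of x * w.prod)| ≤ 1 := by
  rw [coprodDefect_of_mul_of_mul_self hx hv hw]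
  by_cases hvw : v.fstIdx = w.fstIdx
  · rwa [hvw, add_sub_cancel_right]
  · rw [coprodDefect_of_fstIdx_ne hτ fun j hj hj' ↦ hvw (hj.trans hj'.symm),
      jumpSign_swap v.fstIdx (some i), ← sub_eq_add_neg]
    exact abs_jumpSign_sub_jumpSign_sub_jumpSign_le_one v.fstIdx w.fstIdx i

theorem abs_coprodDefect_prod_le_one (hτ : ∀ i, IsOddQuasimorphism (τ i)) (v w : CoprodI.Word G) :
    |coprodDefect τ v.prod w.prod| ≤ 1 := by
  have hinv i x := (hτ i).map_inv x
  have hbranch {v w : CoprodI.Word G} (h : ∀ i, v.fstIdx = some i → w.fstIdx ≠ some i) :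
      |coprodDefect τ v.prod w.prod| ≤ 1 := by
    rw [coprodDefect_of_fstIdx_ne hinv h]
    exact abs_jumpSign_le_one v.fstIdx w.fstIdx
  induction v using CoprodI.Word.consRecOn generalizing w with
  | empty => exact hbranch (by simp [CoprodI.Word.fstIdx])
  | cons i x v hv hx ih =>
    cases w using CoprodI.Word.consRecOn with
    | empty => exact hbranch (by simp [CoprodI.Word.fstIdx])
    | cons j y w hw hy _ =>
      obtain hij | rfl := ne_or_eq i j
      · exact hbranch (by simpa using hij.symm)
      rw [CoprodI.Word.prod_cons, CoprodI.Word.prod_cons]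
      obtain hxy | rfl := ne_or_eq x y
      · rw [coprodDefect_of_mul_of_mul_of_ne hinv hx hy hxy hv hw]
        exact (hτ i).abs_map_inv_mul_add_sub_le x y
      · exact abs_coprodDefect_of_mul_of_mul_self_le_one hinv hx hv hw (ih w)

theorem isOddQuasimorphism_coprodWeight (hτ : ∀ i, IsOddQuasimorphism (τ i)) :
    IsOddQuasimorphism (coprodWeight τ) where
  map_inv := coprodWeight_inv fun i ↦ (hτ i).map_inv
  odd g hg := by
    obtain ⟨w, rfl⟩ := exists_word_prod_eq g
    exact odd_coprodWeight_prod (fun i ↦ (hτ i).odd) (by rintro rfl; exact hg rfl)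
  abs_map_mul_sub_sub_le g h := by
    obtain ⟨v, hv⟩ := exists_word_prod_eq g⁻¹
    obtain ⟨w, rfl⟩ := exists_word_prod_eq h
    obtain rfl : g = v.prod⁻¹ := inv_eq_iff_eq_inv.1 hv.symm
    simpa [coprodDefect, coprodWeight_inv fun i ↦ (hτ i).map_inv] using
      abs_coprodDefect_prod_le_one hτ v w

end Group

theorem freeProduct_leftOrderable_iff_general {ι : Type*} {G : ι → Type*} [∀ i, Group (G i)] :
    IsLeftOrderable (CoprodI G) ↔ ∀ i, IsLeftOrderable (G i) := by
  classical
  refine ⟨fun h i ↦ h.of_injective CoprodI.of (CoprodI.of_injective i), fun h ↦ ?_⟩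
  choose τ hτ using fun i ↦ (h i).exists_isOddQuasimorphism
  obtain ⟨_, -⟩ := exists_wellFoundedLT ι
  exact (isOddQuasimorphism_coprodWeight hτ).isLeftOrderable

/-- The embedding of `G * H` into `(G × H) * (G × H)` that sends `G` to the first factor and `H` to
the second. The constant family `G × H` allows `G` and `H` to live in different universes. -/
def coprodToCoprodIProd (G H : Type*) [Monoid G] [Monoid H] :
    Coprod G H →* CoprodI fun _ : Bool ↦ G × H :=
  Coprod.lift ((CoprodI.of (i := false)).comp (MonoidHom.inl G H))
    ((CoprodI.of (i := true)).comp (MonoidHom.inr G H))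

theorem coprodToCoprodIProd_injective (G H : Type*) [Monoid G] [Monoid H] :
    Function.Injective (coprodToCoprodIProd G H) := by
  let retraction : (CoprodI fun _ : Bool ↦ G × H) →* Coprod G H :=
    CoprodI.lift fun b ↦ bif b then Coprod.inr.comp (MonoidHom.snd G H)
      else Coprod.inl.comp (MonoidHom.fst G H)
  have hretraction : retraction.comp (coprodToCoprodIProd G H) = MonoidHom.id _ := by
    ext <;> simp [retraction, coprodToCoprodIProd]
  exact Function.LeftInverse.injective (DFunLike.congr_fun hretraction)

/-- (Vinogradov) A free product `G₁ * G₂` is left-orderable iff both `G₁` and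
`G₂` are left-orderable. -/
theorem freeProduct_leftOrderable_iff {G₁ G₂ : Type*} [Group G₁] [Group G₂] :
    IsLeftOrderable (Monoid.Coprod G₁ G₂) ↔ IsLeftOrderable G₁ ∧ IsLeftOrderable G₂ :=
  ⟨fun h ↦ ⟨h.of_injective Coprod.inl Coprod.inl_injective,
      h.of_injective Coprod.inr Coprod.inr_injective⟩,
    fun ⟨h₁, h₂⟩ ↦ (freeProduct_leftOrderable_iff_general.2 fun _ ↦ h₁.prod h₂).of_injective
      (coprodToCoprodIProd G₁ G₂) (coprodToCoprodIProd_injective G₁ G₂)⟩
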